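/- arXiv:1904.11149 — 2 statements merged into one kernel-verified Lean document; each statement's English description precedes it below -/
import Mathlib

section
/- Let r > 1/2 and let z_n > 0 with y_n = 1/z_n satisfying y_n ≥ n + n^r eventually. Then χ_{z_n}^{(n)} = (y_n/(y_n−n)) (1 − y_n/(y_n−n)² + O(y_n²/(y_n−n)⁴)) as n → ∞. In particular χ_{z_n}^{(n)} ∼ y_n/(y_n − n). -/
open Finset Filter Asymptotics

/-- `c_N^{(n)} = (n-1)!/(n-1-N)!`, the number of `N`-step self-avoiding walks on `K_n`. -/
noncomputable def sawCount (n N : ℕ) : ℝ :=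
  (Nat.factorial (n - 1) : ℝ) / (Nat.factorial (n - 1 - N) : ℝ)

/-- The susceptibility `χ_z^{(n)} = ∑_{N=0}^{n-1} c_N^{(n)} z^N`. -/
noncomputable def chi (n : ℕ) (z : ℝ) : ℝ :=
  ∑ N ∈ Finset.range n, sawCount n N * z ^ N

/-!
The susceptibility satisfies `χ^{(n+1)} = 1 + (n / y) χ^{(n)}`. As the coefficient `n / y` is
nonnegative, a sequence satisfying this recurrence with `≤` (resp. `≥`) in place of `=` stays below
(resp. above) `χ`. With `d = y - n` and `t = y / d²`, the Gaussian approximation of `χ` expands as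
`(y / d) (1 - t + 3 t² - 15 t³ + ⋯)`, the series of the Mills ratio. Its truncation after `t`
satisfies `≤` and its truncation after `3 t²` satisfies `≥`, so for all `0 < n < y` the error of the
two-term expansion relative to `y / d` lies between `0` and `3 t²`.
-/

section Recurrence

lemma sawCount_zero_right (n : ℕ) : sawCount n 0 = 1 := by
  simp [sawCount, Nat.factorial_ne_zero]

lemma sawCount_succ_succ {n : ℕ} (hn : n ≠ 0) (N : ℕ) :
    sawCount (n + 1) (N + 1) = n * sawCount n N := by
  have hsub : n - (N + 1) = n - 1 - N := by omega
  have hfact : (n.factorial : ℝ) = n * (n - 1).factorial := by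
    exact_mod_cast (Nat.mul_factorial_pred hn).symm
  rw [sawCount, sawCount, Nat.add_sub_cancel, hsub, hfact, mul_div_assoc]

lemma chi_succ (n : ℕ) (z : ℝ) : chi (n + 1) z = 1 + n * z * chi n z := by
  rcases eq_or_ne n 0 with rfl | hn
  · simp [chi, sawCount_zero_right]
  · rw [chi, chi, sum_range_succ', mul_sum, add_comm, sawCount_zero_right, pow_zero, mul_one]
    congr 1
    refine sum_congr rfl fun N _ => ?_
    rw [sawCount_succ_succ hn, pow_succ]
    ring

variable {n : ℕ} {z : ℝ} {f : ℕ → ℝ}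

-- The initial condition is the case `k = 0` of `hf`, which reads `f 1 ≤ 1 = chi 1 z`.
lemma le_chi_of_le_recurrence (hz : 0 ≤ z) (hn : 0 < n)
    (hf : ∀ k < n, f (k + 1) ≤ 1 + k * z * f k) : f n ≤ chi n z := by
  induction n, hn using Nat.le_induction with
  | base => simpa [chi_succ] using hf 0 one_pos
  | succ n hn ih =>
    have ihn : f n ≤ chi n z := ih fun k hk => hf k (hk.trans n.lt_succ_self)
    calc f (n + 1) ≤ 1 + n * z * f n := hf n n.lt_succ_self
      _ ≤ 1 + n * z * chi n z := by gcongr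
      _ = chi (n + 1) z := (chi_succ n z).symm

lemma chi_le_of_recurrence_le (hz : 0 ≤ z) (hn : 0 < n)
    (hf : ∀ k < n, 1 + k * z * f k ≤ f (k + 1)) : chi n z ≤ f n := by
  induction n, hn using Nat.le_induction with
  | base => simpa [chi_succ] using hf 0 one_pos
  | succ n hn ih =>
    have ihn : chi n z ≤ f n := ih fun k hk => hf k (hk.trans n.lt_succ_self)
    calc chi (n + 1) z = 1 + n * z * chi n z := chi_succ n z
      _ ≤ 1 + n * z * f n := by gcongr
      _ ≤ f (n + 1) := hf n n.lt_succ_self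

end Recurrence

section Bounds

variable {n : ℕ} {d y : ℝ}

/-- The expansion `(y / d) (1 - t)`, `t = y / d²`, of the susceptibility, where `d` stands for
`y - n`. -/
noncomputable def chiTwoTerm (y d : ℝ) : ℝ :=
  y / d * (1 - y / d ^ 2)

/-- The expansion `(y / d) (1 - t + 3 t²)`, `t = y / d²`, of the susceptibility, where `d` stands
for `y - n`. -/
noncomputable def chiThreeTerm (y d : ℝ) : ℝ :=
  y / d * (1 - y / d ^ 2 + 3 * (y ^ 2 / d ^ 4))

lemma chiTwoTerm_defect (hd : 0 < d) (hy : 0 < y) :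
    1 + (y - (d + 1)) * (1 / y) * chiTwoTerm y (d + 1) - chiTwoTerm y d =
      y * (y * (3 * d ^ 2 + 3 * d + 1) - d ^ 2 * (d + 1)) / (d ^ 3 * (d + 1) ^ 3) := by
  unfold chiTwoTerm
  field_simp
  ring

lemma chiTwoTerm_le_recurrence (hd : 0 < d) (hy : d + 1 ≤ y) :
    chiTwoTerm y d ≤ 1 + (y - (d + 1)) * (1 / y) * chiTwoTerm y (d + 1) := by
  have hy₀ : 0 < y := by linarith
  have hnum : d ^ 2 * (d + 1) ≤ y * (3 * d ^ 2 + 3 * d + 1) := by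
    rw [mul_comm]
    gcongr
    nlinarith
  rw [← sub_nonneg, chiTwoTerm_defect hd hy₀]
  have := sub_nonneg.2 hnum
  positivity

lemma chiThreeTerm_defect (hd : 0 < d) (hy : 0 < y) :
    chiThreeTerm y d - (1 + (y - (d + 1)) * (1 / y) * chiThreeTerm y (d + 1)) =
      y * (y * (3 * y * (5 * d ^ 4 + 10 * d ^ 3 + 10 * d ^ 2 + 5 * d + 1)
        - d ^ 2 * (6 * d ^ 3 + 10 * d ^ 2 + 5 * d + 1)) + d ^ 4 * (d + 1) ^ 3)
        / (d ^ 5 * (d + 1) ^ 5) := by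
  unfold chiThreeTerm
  field_simp
  ring

lemma recurrence_le_chiThreeTerm (hd : 0 < d) (hy : d + 1 ≤ y) :
    1 + (y - (d + 1)) * (1 / y) * chiThreeTerm y (d + 1) ≤ chiThreeTerm y d := by
  have hy₀ : 0 < y := by linarith
  have hnum : d ^ 2 * (6 * d ^ 3 + 10 * d ^ 2 + 5 * d + 1) ≤
      3 * y * (5 * d ^ 4 + 10 * d ^ 3 + 10 * d ^ 2 + 5 * d + 1) :=
    calc d ^ 2 * (6 * d ^ 3 + 10 * d ^ 2 + 5 * d + 1)
        = d * (6 * d ^ 4 + 10 * d ^ 3 + 5 * d ^ 2 + d) := by ring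
      _ ≤ y * (15 * d ^ 4 + 30 * d ^ 3 + 30 * d ^ 2 + 15 * d + 3) := by
        gcongr ?_ * ?_
        · linarith
        · linarith [pow_pos hd 2, pow_pos hd 3, pow_pos hd 4]
      _ = 3 * y * (5 * d ^ 4 + 10 * d ^ 3 + 10 * d ^ 2 + 5 * d + 1) := by ring
  rw [← sub_nonneg, chiThreeTerm_defect hd hy₀]
  have := sub_nonneg.2 hnum
  positivity

lemma chiTwoTerm_le_chi (hn : 0 < n) (hy : n < y) : chiTwoTerm y (y - n) ≤ chi n (1 / y) := by
  have hy₀ : 0 < y := n.cast_nonneg.trans_lt hy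
  refine le_chi_of_le_recurrence (f := fun k => chiTwoTerm y (y - k)) (by positivity) hn
    fun k hk => ?_
  have hkn : ((k + 1 : ℕ) : ℝ) ≤ n := by exact_mod_cast hk
  have hstep := chiTwoTerm_le_recurrence (d := y - (k + 1 : ℕ)) (y := y) (by linarith)
    (by push_cast; linarith [k.cast_nonneg (α := ℝ)])
  have hd : y - (k + 1 : ℕ) + 1 = y - k := by push_cast; ring
  rwa [hd, sub_sub_cancel] at hstep

lemma chi_le_chiThreeTerm (hn : 0 < n) (hy : n < y) :
    chi n (1 / y) ≤ chiThreeTerm y (y - n) := by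
  have hy₀ : 0 < y := n.cast_nonneg.trans_lt hy
  refine chi_le_of_recurrence_le (f := fun k => chiThreeTerm y (y - k)) (by positivity) hn
    fun k hk => ?_
  have hkn : ((k + 1 : ℕ) : ℝ) ≤ n := by exact_mod_cast hk
  have hstep := recurrence_le_chiThreeTerm (d := y - (k + 1 : ℕ)) (y := y) (by linarith)
    (by push_cast; linarith [k.cast_nonneg (α := ℝ)])
  have hd : y - (k + 1 : ℕ) + 1 = y - k := by push_cast; ring
  rwa [hd, sub_sub_cancel] at hstep

end Bounds

section RelativeError

/-- The term `E` in `χ = (y / (y - n)) (1 - y / (y - n)² + E)`, the error of the two-term expansion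
of the susceptibility at `z = 1 / y` relative to its leading term. -/
noncomputable def chiRelError (n : ℕ) (y : ℝ) : ℝ :=
  chi n (1 / y) / (y / (y - n)) - (1 - y / (y - n) ^ 2)

lemma chi_div_eq_add_chiRelError (n : ℕ) (y : ℝ) :
    chi n (1 / y) / (y / (y - n)) = 1 - y / (y - n) ^ 2 + chiRelError n y :=
  (add_sub_cancel _ _).symm

variable {n : ℕ} {y : ℝ}

lemma div_sub_natCast_pos (hy : n < y) : 0 < y / (y - n) :=
  div_pos (n.cast_nonneg.trans_lt hy) (sub_pos.2 hy)

lemma chi_eq_mul_add_chiRelError (hy : n < y) :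
    chi n (1 / y) = y / (y - n) * (1 - y / (y - n) ^ 2 + chiRelError n y) := by
  rw [← chi_div_eq_add_chiRelError, mul_div_cancel₀ _ (div_sub_natCast_pos hy).ne']

lemma chiRelError_nonneg (hn : 0 < n) (hy : n < y) : 0 ≤ chiRelError n y := by
  rw [chiRelError, sub_nonneg, le_div_iff₀' (div_sub_natCast_pos hy)]
  exact chiTwoTerm_le_chi hn hy

lemma chiRelError_le (hn : 0 < n) (hy : n < y) :
    chiRelError n y ≤ 3 * (y ^ 2 / (y - n) ^ 4) := by
  rw [chiRelError, sub_le_iff_le_add', div_le_iff₀' (div_sub_natCast_pos hy)]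
  exact chi_le_chiThreeTerm hn hy

end RelativeError

section Asymptotics

variable {y : ℕ → ℝ}

lemma isBigO_chiRelError (hy : ∀ᶠ n : ℕ in atTop, (n : ℝ) < y n) :
    (fun n => chiRelError n (y n)) =O[atTop] fun n : ℕ => y n ^ 2 / (y n - n) ^ 4 := by
  refine IsBigO.of_bound 3 ?_
  filter_upwards [hy, eventually_gt_atTop 0] with n hn hpos
  rw [Real.norm_of_nonneg (chiRelError_nonneg hpos hn), Real.norm_of_nonneg (by positivity)]
  exact chiRelError_le hpos hn

lemma tendsto_chi_div_leadingTerm (hy : ∀ᶠ n : ℕ in atTop, (n : ℝ) < y n)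
    (ht : Tendsto (fun n : ℕ => y n / (y n - n) ^ 2) atTop (nhds 0)) :
    Tendsto (fun n : ℕ => chi n (1 / y n) / (y n / (y n - n))) atTop (nhds 1) := by
  have ht_sq : Tendsto (fun n : ℕ => y n ^ 2 / (y n - n) ^ 4) atTop (nhds 0) := by
    simpa [div_pow, ← pow_mul] using ht.pow 2
  have hE : Tendsto (fun n => chiRelError n (y n)) atTop (nhds 0) :=
    (isBigO_chiRelError hy).trans_tendsto ht_sq
  simpa only [chi_div_eq_add_chiRelError, sub_zero, add_zero] using (ht.const_sub 1).add hE

lemma eventually_lt_of_add_rpow_le {r : ℝ}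
    (hy : ∀ᶠ n : ℕ in atTop, (n : ℝ) + (n : ℝ) ^ r ≤ y n) :
    ∀ᶠ n : ℕ in atTop, (n : ℝ) < y n := by
  filter_upwards [hy, eventually_gt_atTop 0] with n hn hpos
  exact (lt_add_of_pos_right _ (by positivity)).trans_le hn

lemma tendsto_div_sub_sq_zero {r : ℝ} (hr : 1 / 2 < r)
    (hy : ∀ᶠ n : ℕ in atTop, (n : ℝ) + (n : ℝ) ^ r ≤ y n) :
    Tendsto (fun n : ℕ => y n / (y n - n) ^ 2) atTop (nhds 0) := by
  have hlim : Tendsto (fun n : ℕ => (n : ℝ) ^ (-r) + (n : ℝ) ^ (-(2 * r - 1)))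
      atTop (nhds 0) := by
    rw [← add_zero (0 : ℝ)]
    exact ((tendsto_rpow_neg_atTop (by linarith)).add
      (tendsto_rpow_neg_atTop (by linarith))).comp tendsto_natCast_atTop_atTop
  refine squeeze_zero' ?_ ?_ hlim <;>
    filter_upwards [hy, eventually_gt_atTop 0] with n hn hpos
  · have : 0 ≤ y n := le_trans (by positivity) hn
    positivity
  · have hn₀ : (0 : ℝ) < n := Nat.cast_pos.2 hpos
    have hgap : (n : ℝ) ^ r ≤ y n - n := le_sub_iff_add_le'.2 hn
    have hgap₀ : 0 < y n - n := (Real.rpow_pos_of_pos hn₀ r).trans_le hgap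
    calc y n / (y n - n) ^ 2
        = (y n - n)⁻¹ + n / (y n - n) ^ 2 := by field_simp; ring
      _ ≤ ((n : ℝ) ^ r)⁻¹ + n / ((n : ℝ) ^ r) ^ 2 := by gcongr
      _ = (n : ℝ) ^ (-r) + (n : ℝ) ^ (-(2 * r - 1)) := by
        rw [Real.rpow_neg hn₀.le, neg_sub, Real.rpow_sub hn₀, Real.rpow_one, mul_comm 2 r,
          Real.rpow_mul hn₀.le, Real.rpow_two]

end Asymptotics

theorem chi_subcritical_expansion_general (y : ℕ → ℝ)
    (hy : ∀ᶠ n : ℕ in atTop, (n : ℝ) < y n) :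
    (∃ E : ℕ → ℝ,
        (∀ᶠ n : ℕ in atTop,
          chi n (1 / y n) =
            (y n / (y n - n)) * (1 - y n / (y n - n) ^ 2 + E n)) ∧
        E =O[atTop] fun n : ℕ => (y n) ^ 2 / (y n - n) ^ 4) ∧
      (Tendsto (fun n : ℕ => y n / (y n - n) ^ 2) atTop (nhds 0) →
        Tendsto (fun n : ℕ => chi n (1 / y n) / (y n / (y n - n))) atTop (nhds 1)) :=
  ⟨⟨fun n => chiRelError n (y n), hy.mono fun _ => chi_eq_mul_add_chiRelError,
    isBigO_chiRelError hy⟩, tendsto_chi_div_leadingTerm hy⟩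

theorem chi_subcritical_expansion (r : ℝ) (hr : 1 / 2 < r) (y : ℕ → ℝ)
    (hypos : ∀ n, 0 < y n)
    (hy : ∀ᶠ n : ℕ in atTop, (n : ℝ) + (n : ℝ) ^ r ≤ y n) :
    (∃ E : ℕ → ℝ,
        (∀ᶠ n : ℕ in atTop,
          chi n (1 / y n) =
            (y n / (y n - n)) * (1 - y n / (y n - n) ^ 2 + E n)) ∧
        E =O[atTop] fun n : ℕ => (y n) ^ 2 / (y n - n) ^ 4) ∧
      Tendsto (fun n : ℕ => chi n (1 / y n) / (y n / (y n - n))) atTop (nhds 1) := by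
  have hlt : ∀ᶠ n : ℕ in atTop, (n : ℝ) < y n := eventually_lt_of_add_rpow_le hy
  exact (chi_subcritical_expansion_general y hlt).imp_right fun h =>
    h (tendsto_div_sub_sq_zero hr hy)
end

section
/- If τ_n → τ in ℝ and z_n = 1/(n + τ_n n^{1/2}), then χ_{z_n}^{(n)} ∼ √(2πn) e^{τ²/2} (1/2) erfc(τ/√2) as n → ∞. -/
open Finset Filter Real

/-- The complementary error function `erfc(x) = (2/√π) ∫_x^∞ e^{-t²} dt`. -/
noncomputable def erfc (x : ℝ) : ℝ :=
  2 / Real.sqrt π * ∫ t in Set.Ioi x, Real.exp (-t ^ 2)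

/-!
Expanding `(1 + z t) ^ (n - 1)` and integrating term by term against `e^{-t}` gives
`χ_z^{(n)} = ∫_0^∞ (1 + z t) ^ (n - 1) e^{-t} dt`. In the critical window the mass sits at
`t = √n u` with `u` of order one, where the logarithm of the integrand,
`(n - 1) log (1 + u / (√n + τ_n)) - √n u`, tends to `-τ u - u² / 2`. The sandwich
`x - x² / 2 ≤ log (1 + x) ≤ x - x² / (2 (1 + x))` gives this limit, and its right half also
supplies an exponentially decaying majorant, so dominated convergence leaves a Gaussian integral,
which is evaluated by completing the square.
-/

section

open MeasureTheory Topology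

lemma sawCount_succ {n N : ℕ} (hN : N ≤ n) :
    sawCount (n + 1) N = n.choose N * N.factorial := by
  have hfact : ((n - N).factorial : ℝ) ≠ 0 := by positivity
  rw [sawCount, Nat.add_sub_cancel, div_eq_iff hfact]
  exact_mod_cast (Nat.choose_mul_factorial_mul_factorial hN).symm

lemma integral_Ioi_pow_mul_exp_neg (N : ℕ) :
    ∫ t in Set.Ioi (0 : ℝ), t ^ N * exp (-t) = N.factorial := by
  rw [← Gamma_nat_eq_factorial, Gamma_eq_integral (by positivity)]
  simp [mul_comm]

lemma integrableOn_Ioi_pow_mul_exp_neg (N : ℕ) :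
    IntegrableOn (fun t : ℝ => t ^ N * exp (-t)) (Set.Ioi 0) := by
  simpa [mul_comm] using GammaIntegral_convergent (s := N + 1) (by positivity)

lemma chi_succ_eq_integral (n : ℕ) (z : ℝ) :
    chi (n + 1) z = ∫ t in Set.Ioi (0 : ℝ), (1 + z * t) ^ n * exp (-t) := by
  have hexpand (t : ℝ) : (1 + z * t) ^ n * exp (-t) =
      ∑ N ∈ range (n + 1), n.choose N * z ^ N * (t ^ N * exp (-t)) := by
    rw [add_comm, add_pow, Finset.sum_mul]
    refine Finset.sum_congr rfl fun N _ => ?_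
    rw [one_pow, mul_pow]
    ring
  simp only [hexpand]
  rw [chi, integral_finsetSum _ fun N _ => (integrableOn_Ioi_pow_mul_exp_neg N).const_mul _]
  refine Finset.sum_congr rfl fun N hN => ?_
  rw [integral_const_mul, integral_Ioi_pow_mul_exp_neg, sawCount_succ (mem_range_succ_iff.1 hN)]
  ring

lemma chi_succ_eq_mul_integral (n : ℕ) (z : ℝ) {r : ℝ} (hr : 0 < r) :
    chi (n + 1) z = r * ∫ u in Set.Ioi (0 : ℝ), (1 + z * r * u) ^ n * exp (-(r * u)) := by
  have hscale :=
    integral_comp_mul_left_Ioi' (fun t : ℝ => (1 + z * t) ^ n * exp (-t)) 0 hr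
  simp only [mul_zero, smul_eq_mul, ← mul_assoc z] at hscale
  rw [chi_succ_eq_integral, hscale]

lemma erfc_pos (x : ℝ) : 0 < erfc x := by
  have hint : Integrable fun t : ℝ => exp (-t ^ 2) := by
    simpa using integrable_exp_neg_mul_sq one_pos
  have hpos : 0 < ∫ t in Set.Ioi x, exp (-t ^ 2) := by
    have : NeZero (volume.restrict (Set.Ioi x)) := ⟨by simp⟩
    exact integral_exp_pos hint.integrableOn
  exact mul_pos (by positivity) hpos

lemma integral_Ioi_exp_neg_mul_sq (c : ℝ) {b : ℝ} (hb : 0 < b) :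
    ∫ t in Set.Ioi c, exp (-b * t ^ 2) = √(π / b) * (1 / 2) * erfc (√b * c) := by
  have hscale := integral_comp_mul_left_Ioi (fun t : ℝ => exp (-t ^ 2)) c (sqrt_pos.2 hb)
  simp only [mul_pow, sq_sqrt hb.le, smul_eq_mul, ← neg_mul] at hscale
  rw [hscale, erfc, sqrt_div pi_pos.le]
  field_simp

lemma integral_Ioi_exp_neg_mul_sub_mul_sq (a : ℝ) {b : ℝ} (hb : 0 < b) :
    ∫ u in Set.Ioi (0 : ℝ), exp (-a * u - b * u ^ 2) =
      √(π / b) * exp (a ^ 2 / (4 * b)) * (1 / 2) * erfc (a / (2 * √b)) := by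
  have hsquare (u : ℝ) : exp (-a * u - b * u ^ 2) =
      exp (a ^ 2 / (4 * b)) * exp (-b * (u + a / (2 * b)) ^ 2) := by
    rw [← exp_add]
    congr 1
    field_simp
    ring
  have hshift : ∫ u in Set.Ioi (0 : ℝ), exp (-b * (u + a / (2 * b)) ^ 2) =
      ∫ v in Set.Ioi (a / (2 * b)), exp (-b * v ^ 2) := by
    simpa only [Set.preimage_add_const_Ioi, sub_self] using
      (measurePreserving_add_right volume (a / (2 * b))).setIntegral_preimage_emb
      (measurableEmbedding_addRight _) (fun v => exp (-b * v ^ 2)) (Set.Ioi (a / (2 * b)))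
  have harg : √b * (a / (2 * b)) = a / (2 * √b) := by
    field_simp
    rw [sq_sqrt hb.le, mul_comm]
  simp only [hsquare]
  rw [integral_const_mul, hshift, integral_Ioi_exp_neg_mul_sq _ hb, harg]
  ring

lemma sub_sq_div_two_le_log_one_add {x : ℝ} (hx : 0 ≤ x) : x - x ^ 2 / 2 ≤ log (1 + x) := by
  refine le_trans ?_ (le_log_one_add_of_nonneg hx)
  rw [le_div_iff₀ (by positivity)]
  linarith [pow_nonneg hx 3, show (x - x ^ 2 / 2) * (x + 2) = 2 * x - x ^ 3 / 2 by ring]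

lemma log_one_add_le_sub_sq_div {x : ℝ} (hx : 0 ≤ x) :
    log (1 + x) ≤ x - x ^ 2 / (2 * (1 + x)) :=
  calc log (1 + x) ≤ sinh (log (1 + x)) := self_le_sinh_iff.2 (log_nonneg (by linarith))
    _ = (1 + x - (1 + x)⁻¹) / 2 := sinh_log (by positivity)
    _ = x - x ^ 2 / (2 * (1 + x)) := by field_simp; ring

section ExponentBounds

variable {p z r u : ℝ}

lemma rpow_one_add_mul_exp_neg (hz : 0 ≤ z) (hu : 0 ≤ u) :
    (1 + z * u) ^ p * exp (-(r * u)) = exp (p * log (1 + z * u) - r * u) := by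
  rw [rpow_def_of_pos (by positivity), ← exp_add, mul_comm p, sub_eq_add_neg]

lemma le_mul_log_one_add_sub (hp : 0 ≤ p) (hz : 0 ≤ z) (hu : 0 ≤ u) :
    -(r - p * z) * u - p * z ^ 2 * (u ^ 2 / 2) ≤ p * log (1 + z * u) - r * u := by
  have := mul_le_mul_of_nonneg_left (sub_sq_div_two_le_log_one_add (mul_nonneg hz hu)) hp
  linear_combination this

lemma mul_log_one_add_sub_le (hp : 0 ≤ p) (hz : 0 ≤ z) (hu : 0 ≤ u) :
    p * log (1 + z * u) - r * u ≤
      -(r - p * z) * u - p * z ^ 2 * (u ^ 2 / (2 * (1 + z * u))) := by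
  have := mul_le_mul_of_nonneg_left (log_one_add_le_sub_sq_div (mul_nonneg hz hu)) hp
  linear_combination this

lemma mul_sub_sq_le_sq_div_one_add {M : ℝ} (hz : 0 ≤ z) (hzM : z * M ≤ 1) (hu : 0 ≤ u) :
    M * u - M ^ 2 ≤ u ^ 2 / (1 + z * u) := by
  rw [le_div_iff₀ (by positivity)]
  rcases le_total u M with huM | hMu
  · have hneg : M * u - M ^ 2 ≤ 0 := by
      rw [sq, ← mul_sub]
      exact mul_nonpos_of_nonneg_of_nonpos (hu.trans huM) (sub_nonpos.2 huM)
    exact (mul_nonpos_of_nonpos_of_nonneg hneg (by positivity)).trans (sq_nonneg u)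
  · calc (M * u - M ^ 2) * (1 + z * u) = (u - M) * (M + z * M * u) := by ring
      _ ≤ (u - M) * (M + 1 * u) := by gcongr
      _ ≤ u ^ 2 := by linarith [sq_nonneg M]

lemma mul_log_one_add_sub_le_linear {b c M : ℝ} (hb : 0 ≤ b) (hz : 0 < z) (hzM : z * M ≤ 1)
    (hu : 0 ≤ u) (hlin : -(r - p * z) ≤ c) (hquad : b ≤ p * z ^ 2) :
    p * log (1 + z * u) - r * u ≤ c * u - b * ((M * u - M ^ 2) / 2) := by
  have hp : 0 ≤ p := nonneg_of_mul_nonneg_left (hb.trans hquad) (by positivity)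
  calc p * log (1 + z * u) - r * u
      ≤ -(r - p * z) * u - p * z ^ 2 * (u ^ 2 / (2 * (1 + z * u))) :=
        mul_log_one_add_sub_le hp hz.le hu
    _ ≤ c * u - b * (u ^ 2 / (2 * (1 + z * u))) := by gcongr
    _ = c * u - b * (u ^ 2 / (1 + z * u) / 2) := by rw [div_div, mul_comm (1 + z * u)]
    _ ≤ c * u - b * ((M * u - M ^ 2) / 2) := by
      gcongr
      exact mul_sub_sq_le_sq_div_one_add hz.le hzM hu

end ExponentBounds

section LaplaceLimit

variable {ι : Type*} {l : Filter ι} {p z r : ι → ℝ} {a b : ℝ}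

lemma tendsto_mul_log_one_add_sub (hb : 0 < b) (hz : Tendsto z l (𝓝[>] 0))
    (hlin : Tendsto (fun i => r i - p i * z i) l (𝓝 a))
    (hquad : Tendsto (fun i => p i * z i ^ 2) l (𝓝 (2 * b))) {u : ℝ} (hu : 0 ≤ u) :
    Tendsto (fun i => p i * log (1 + z i * u) - r i * u) l (𝓝 (-a * u - b * u ^ 2)) := by
  obtain ⟨hz0, hzpos : ∀ᶠ i in l, 0 < z i⟩ := tendsto_nhdsWithin_iff.1 hz
  have hp : ∀ᶠ i in l, 0 ≤ p i := by
    filter_upwards [hquad.eventually_const_lt (by positivity : 0 < 2 * b)] with i hi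
    exact (pos_of_mul_pos_left hi (sq_nonneg _)).le
  have hfrac : Tendsto (fun i => u ^ 2 / (2 * (1 + z i * u))) l (𝓝 (u ^ 2 / 2)) := by
    have hden : Tendsto (fun i => 2 * (1 + z i * u)) l (𝓝 2) := by
      simpa using ((hz0.mul_const u).const_add 1).const_mul 2
    exact tendsto_const_nhds.div hden two_ne_zero
  have hlower := (hlin.neg.mul_const u).sub (hquad.mul_const (u ^ 2 / 2))
  have hupper := (hlin.neg.mul_const u).sub (hquad.mul hfrac)
  rw [show -a * u - 2 * b * (u ^ 2 / 2) = -a * u - b * u ^ 2 by ring] at hlower hupper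
  refine tendsto_of_tendsto_of_tendsto_of_le_of_le' hlower hupper ?_ ?_
  · filter_upwards [hp, hzpos] with i hpi hzi using le_mul_log_one_add_sub hpi hzi.le hu
  · filter_upwards [hp, hzpos] with i hpi hzi using mul_log_one_add_sub_le hpi hzi.le hu

lemma exists_eventually_rpow_one_add_mul_exp_neg_le (hb : 0 < b) (hz : Tendsto z l (𝓝[>] 0))
    (hlin : Tendsto (fun i => r i - p i * z i) l (𝓝 a))
    (hquad : Tendsto (fun i => p i * z i ^ 2) l (𝓝 (2 * b))) :
    ∃ C, ∀ᶠ i in l, ∀ u, 0 ≤ u → (1 + z i * u) ^ p i * exp (-(r i * u)) ≤ C * exp (-u) := by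
  obtain ⟨hz0, hzpos : ∀ᶠ i in l, 0 < z i⟩ := tendsto_nhdsWithin_iff.1 hz
  -- This `M` makes the linear coefficient `(|a| + 1) - b * M / 2` of the majorant equal to `-1`.
  set M := 2 * (|a| + 2) / b with hM
  have hzM : Tendsto (fun i => z i * M) l (𝓝 0) := by simpa using hz0.mul_const M
  refine ⟨exp (b * M ^ 2 / 2), ?_⟩
  filter_upwards [hzpos, hzM.eventually_le_const one_pos,
    hlin.neg.eventually_le_const (by linarith [neg_le_abs a] : -a < |a| + 1),
    hquad.eventually_const_le (by linarith : b < 2 * b)] with i hzi hzMi hlini hquadi u hu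
  rw [rpow_one_add_mul_exp_neg hzi.le hu, ← exp_add, exp_le_exp]
  refine (mul_log_one_add_sub_le_linear hb.le hzi hzMi hu hlini hquadi).trans_eq ?_
  rw [hM]
  field_simp
  ring

theorem tendsto_integral_rpow_one_add_mul_exp_neg [l.IsCountablyGenerated] (hb : 0 < b)
    (hz : Tendsto z l (𝓝[>] 0))
    (hlin : Tendsto (fun i => r i - p i * z i) l (𝓝 a))
    (hquad : Tendsto (fun i => p i * z i ^ 2) l (𝓝 (2 * b))) :
    Tendsto (fun i => ∫ u in Set.Ioi (0 : ℝ), (1 + z i * u) ^ p i * exp (-(r i * u))) l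
      (𝓝 (∫ u in Set.Ioi (0 : ℝ), exp (-a * u - b * u ^ 2))) := by
  obtain ⟨-, hzpos : ∀ᶠ i in l, 0 < z i⟩ := tendsto_nhdsWithin_iff.1 hz
  obtain ⟨C, hC⟩ := exists_eventually_rpow_one_add_mul_exp_neg_le hb hz hlin hquad
  refine tendsto_integral_filter_of_dominated_convergence (fun u => C * exp (-u))
    (.of_forall fun i => Measurable.aestronglyMeasurable (by fun_prop)) ?_
    ((integrableOn_exp_neg_Ioi 0).const_mul C) ?_
  · filter_upwards [hC, hzpos] with i hCi hzi
    filter_upwards [ae_restrict_mem measurableSet_Ioi] with u hu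
    have hbase : 0 ≤ 1 + z i * u := by linarith [mul_pos hzi (Set.mem_Ioi.1 hu)]
    rw [norm_of_nonneg (by positivity)]
    exact hCi u (le_of_lt hu)
  · filter_upwards [ae_restrict_mem measurableSet_Ioi] with u hu
    refine (tendsto_mul_log_one_add_sub hb hz hlin hquad (le_of_lt hu)).rexp.congr' ?_
    filter_upwards [hzpos] with i hzi
    exact (rpow_one_add_mul_exp_neg hzi.le (le_of_lt hu)).symm

end LaplaceLimit

section CriticalWindow

variable {ι : Type*} {l : Filter ι} {s τ : ι → ℝ} {τ₀ : ℝ}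

lemma tendsto_div_self_add (hs : Tendsto s l atTop) (hτ : Tendsto τ l (𝓝 τ₀)) :
    Tendsto (fun i => s i / (s i + τ i)) l (𝓝 1) := by
  have hinv : Tendsto (fun i => 1 + τ i / s i) l (𝓝 1) := by
    simpa using (hτ.div_atTop hs).const_add 1
  have hlim := hinv.inv₀ one_ne_zero
  rw [inv_one] at hlim
  refine hlim.congr' ?_
  filter_upwards [hs.eventually_gt_atTop 0] with i hsi
  rw [one_add_div hsi.ne', inv_div]

lemma tendsto_sub_sq_sub_one_mul_inv_add (hs : Tendsto s l atTop) (hτ : Tendsto τ l (𝓝 τ₀)) :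
    Tendsto (fun i => s i - (s i ^ 2 - 1) * (s i + τ i)⁻¹) l (𝓝 τ₀) := by
  have hlim : Tendsto (fun i => (τ i + (s i)⁻¹) * (s i / (s i + τ i))) l (𝓝 τ₀) := by
    simpa using (hτ.add hs.inv_tendsto_atTop).mul (tendsto_div_self_add hs hτ)
  refine hlim.congr' ?_
  filter_upwards [hs.eventually_gt_atTop 0, (hs.atTop_add hτ).eventually_gt_atTop 0]
    with i hsi hsτi
  field_simp
  ring

lemma tendsto_sq_sub_one_mul_inv_add_sq (hs : Tendsto s l atTop) (hτ : Tendsto τ l (𝓝 τ₀)) :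
    Tendsto (fun i => (s i ^ 2 - 1) * (s i + τ i)⁻¹ ^ 2) l (𝓝 1) := by
  have hlim : Tendsto (fun i => (1 - (s i)⁻¹ ^ 2) * (s i / (s i + τ i)) ^ 2) l (𝓝 1) := by
    simpa using ((hs.inv_tendsto_atTop.pow 2).const_sub 1).mul ((tendsto_div_self_add hs hτ).pow 2)
  refine hlim.congr' ?_
  filter_upwards [hs.eventually_gt_atTop 0, (hs.atTop_add hτ).eventually_gt_atTop 0]
    with i hsi hsτi
  field_simp

end CriticalWindow

lemma chi_div_sqrt_eq_integral {n : ℕ} (hn : 0 < n) (t : ℝ) :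
    chi n (1 / (n + t * √n)) / √n =
      ∫ u in Set.Ioi (0 : ℝ), (1 + (√n + t)⁻¹ * u) ^ (√n ^ 2 - 1) * exp (-(√n * u)) := by
  have hs : 0 < √(n : ℝ) := sqrt_pos.2 (by exact_mod_cast hn)
  have hz : 1 / (n + t * √n) * √n = (√n + t)⁻¹ := by
    rw [show (n : ℝ) + t * √n = (√n + t) * √n by rw [add_mul, mul_self_sqrt n.cast_nonneg]]
    field_simp
  have hp : √(n : ℝ) ^ 2 - 1 = (n - 1 : ℕ) := by
    rw [sq_sqrt n.cast_nonneg, Nat.cast_pred hn]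
  obtain ⟨k, rfl⟩ := Nat.exists_eq_add_of_le' hn
  rw [chi_succ_eq_mul_integral _ _ hs, hz, mul_div_cancel_left₀ _ hs.ne']
  simp only [hp, rpow_natCast, Nat.add_sub_cancel]

theorem tendsto_chi_div_sqrt {τ : ℕ → ℝ} {τ₀ : ℝ} (hτ : Tendsto τ atTop (𝓝 τ₀)) :
    Tendsto (fun n : ℕ => chi n (1 / (n + τ n * √n)) / √n) atTop
      (𝓝 (√(2 * π) * exp (τ₀ ^ 2 / 2) * (1 / 2) * erfc (τ₀ / √2))) := by
  have hs : Tendsto (fun n : ℕ => √(n : ℝ)) atTop atTop :=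
    tendsto_sqrt_atTop.comp tendsto_natCast_atTop_atTop
  have hz : Tendsto (fun n : ℕ => (√(n : ℝ) + τ n)⁻¹) atTop (𝓝[>] 0) :=
    tendsto_inv_atTop_nhdsGT_zero.comp (hs.atTop_add hτ)
  have hlimit := tendsto_integral_rpow_one_add_mul_exp_neg (b := 1 / 2) (by norm_num) hz
    (tendsto_sub_sq_sub_one_mul_inv_add hs hτ)
    (by simpa using tendsto_sq_sub_one_mul_inv_add_sq hs hτ)
  have hgauss : ∫ u in Set.Ioi (0 : ℝ), exp (-τ₀ * u - 1 / 2 * u ^ 2) =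
      √(2 * π) * exp (τ₀ ^ 2 / 2) * (1 / 2) * erfc (τ₀ / √2) := by
    have htwo : 2 * √(1 / 2) = √2 := by
      rw [sqrt_div' _ zero_le_two]
      simp [← div_eq_mul_inv]
    rw [integral_Ioi_exp_neg_mul_sub_mul_sq _ (by norm_num), htwo]
    norm_num [mul_comm]
  rw [hgauss] at hlimit
  refine hlimit.congr' ?_
  filter_upwards [eventually_gt_atTop 0] with n hn using (chi_div_sqrt_eq_integral hn _).symm

end

theorem chi_critical_window (τ : ℕ → ℝ) (τ₀ : ℝ)
    (hτ : Tendsto τ atTop (nhds τ₀)) :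
    Tendsto
      (fun n : ℕ =>
        chi n (1 / ((n : ℝ) + τ n * Real.sqrt n)) /
          (Real.sqrt (2 * π * n) * Real.exp (τ₀ ^ 2 / 2) *
            ((1 : ℝ) / 2) * erfc (τ₀ / Real.sqrt 2)))
      atTop (nhds 1) := by
  have hpos : 0 < √(2 * π) * exp (τ₀ ^ 2 / 2) * (1 / 2) * erfc (τ₀ / √2) := by
    have := erfc_pos (τ₀ / √2)
    positivity
  have hratio := (tendsto_chi_div_sqrt hτ).div_const
    (√(2 * π) * exp (τ₀ ^ 2 / 2) * (1 / 2) * erfc (τ₀ / √2))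
  rw [div_self hpos.ne'] at hratio
  refine hratio.congr fun n => ?_
  rw [sqrt_mul (by positivity) (n : ℝ), div_div]
  ring_nf
end
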